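/- Q_1(2,k) > β^k for all sufficiently large k, where β = β_{2,1} ≈ 1.08239 is the smallest positive real root of y^4 - 8y^2 + 8 = 0; equivalently β = sqrt(2/(1 + 1/√2)). -/

import Mathlib

/-- `x` is a `k`-term quasi-progression of diameter `n`: for some positive `d`, all
successive differences lie in `[d, d+n]`. -/
def IsQuasiProg (n k : ℕ) (x : ℕ → ℕ) : Prop :=
  ∃ d : ℕ, 1 ≤ d ∧ ∀ j, j + 1 < k → x j + d ≤ x (j + 1) ∧ x (j + 1) ≤ x j + d + n

/-- `Q_n(r,k)`: least `N` such that every `r`-coloring of `{1,...,N}` yields a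
monochromatic `k`-term quasi-progression of diameter `n`. -/
noncomputable def Q (n r k : ℕ) : ℕ :=
  sInf {N | ∀ χ : ℕ → Fin r, ∃ x : ℕ → ℕ,
    (∀ j < k, x j ∈ Finset.Icc 1 N) ∧ (∀ j < k, χ (x j) = χ (x 0)) ∧ IsQuasiProg n k x}

def pathA (d : ℕ) : ℕ → List Bool → Finset ℕ
  | a, [] => {a}
  | a, s :: w => insert a (pathA d (a + d + s.toNat) w)

def altB (d : ℕ) : Bool → ℕ → List Bool → Finset ℕ
  | _, _, [] => ∅
  | p, a, s :: w => (if p = true ∧ s = false then {a - 1} else ∅) ∪ altB d s (a + d + s.toNat) w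

def rl : Bool → List Bool → ℕ
  | _, [] => 0
  | p, s :: w => (if p = true ∧ s = false then 1 else 0) + rl s w

def wordsF : ℕ → Finset (List Bool)
  | 0 => {[]}
  | m + 1 => (wordsF m).image (List.cons false) ∪ (wordsF m).image (List.cons true)

lemma mem_wordsF (m : ℕ) (w : List Bool) : w ∈ wordsF m ↔ w.length = m := by
  induction m generalizing w with
  | zero => simp [wordsF]
  | succ m ih =>
    cases w with
    | nil => simp [wordsF]
    | cons s w => cases s <;> simp [wordsF, ih]

lemma sum_wordsF_succ (m : ℕ) (f : List Bool → ℝ) :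
    ∑ w ∈ wordsF (m + 1), f w
      = ∑ w ∈ wordsF m, f (false :: w) + ∑ w ∈ wordsF m, f (true :: w) := by
  rw [wordsF, Finset.sum_union, Finset.sum_image, Finset.sum_image]
  · intro x _ y _ h; simpa using h
  · intro x _ y _ h; simpa using h
  · rw [Finset.disjoint_left]
    intro x hx hy
    simp only [Finset.mem_image] at hx hy
    obtain ⟨u, _, rfl⟩ := hx
    obtain ⟨v, _, h⟩ := hy
    simp at h

lemma sum_rl_le (m : ℕ) :
    ∑ w ∈ wordsF m, (1 / 2 : ℝ) ^ rl false w ≤ √2 * (1 + 1 / √2) ^ m ∧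
    ∑ w ∈ wordsF m, (1 / 2 : ℝ) ^ rl true w ≤ (1 + 1 / √2) ^ m := by
  have h2 : √2 * √2 = (2 : ℝ) := Real.mul_self_sqrt (by norm_num)
  have h0 : (0 : ℝ) < √2 := by positivity
  have h1 : (1 : ℝ) ≤ √2 := by nlinarith
  have hi : 1 / √2 = √2 / 2 := by field_simp; linarith
  rw [hi]
  induction m with
  | zero => simp [wordsF, rl, h1]
  | succ m ih =>
    obtain ⟨ih1, ih2⟩ := ih
    rw [sum_wordsF_succ, sum_wordsF_succ]
    simp only [rl, Bool.false_eq_true, false_and, and_true, true_and, if_true, if_false, zero_add,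
      Bool.true_eq_false, pow_add, pow_one, ← Finset.mul_sum]
    set P := (1 + √2 / 2) ^ m
    constructor
    · have : √2 * (P * (1 + √2 / 2)) = √2 * P + P := by linear_combination (P / 2) * h2
      linarith
    · nlinarith

lemma pathA_ge (d a : ℕ) (w : List Bool) : ∀ y ∈ pathA d a w, a ≤ y := by
  induction w generalizing a with
  | nil => simp [pathA]
  | cons s w ih =>
    intro y hy
    simp only [pathA, Finset.mem_insert] at hy
    rcases hy with rfl | hy
    · exact le_rfl
    · have := ih _ y hy; omega

lemma pathA_le (d a : ℕ) (w : List Bool) : ∀ y ∈ pathA d a w, y ≤ a + (d + 1) * w.length := by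
  induction w generalizing a with
  | nil => simp [pathA]
  | cons s w ih =>
    intro y hy
    simp only [pathA, Finset.mem_insert] at hy
    rw [List.length_cons, mul_add]
    rcases hy with rfl | hy
    · omega
    · have := ih _ y hy
      have := Bool.toNat_le s
      omega

lemma altB_le (d a : ℕ) (p : Bool) (w : List Bool) :
    ∀ y ∈ altB d p a w, y ≤ a + (d + 1) * w.length := by
  induction w generalizing a p with
  | nil => simp [altB]
  | cons s w ih =>
    intro y hy
    simp only [altB, Finset.mem_union] at hy
    rw [List.length_cons, mul_add]
    rcases hy with hy | hy
    · split_ifs at hy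
      · simp at hy; omega
      · simp at hy
    · have := ih _ _ y hy
      have := Bool.toNat_le s
      omega

lemma altB_ge (d a : ℕ) (ha : 1 ≤ a) (p : Bool) (w : List Bool) :
    ∀ y ∈ altB d p a w, (y + 1 = a ∧ p = true) ∨ a + d ≤ y := by
  induction w generalizing a p with
  | nil => simp [altB]
  | cons s w ih =>
    intro y hy
    simp only [altB, Finset.mem_union] at hy
    rcases hy with hy | hy
    · split_ifs at hy with h
      · simp at hy; left; exact ⟨by omega, h.1⟩
      · simp at hy
    · rcases ih _ (by omega) _ y hy with ⟨h, rfl⟩ | h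
      · simp at h; omega
      · omega

lemma card_pathA (d a : ℕ) (hd : 1 ≤ d) (w : List Bool) : (pathA d a w).card = w.length + 1 := by
  induction w generalizing a with
  | nil => simp [pathA]
  | cons s w ih =>
    rw [pathA, Finset.card_insert_of_notMem, ih, List.length_cons]
    intro h
    have := pathA_ge _ _ _ _ h
    omega

lemma card_altB (d a : ℕ) (hd : 1 ≤ d) (ha : 1 ≤ a) (p : Bool) (w : List Bool) :
    (altB d p a w).card = rl p w := by
  induction w generalizing a p with
  | nil => simp [altB, rl]
  | cons s w ih =>
    rw [altB, Finset.card_union_of_disjoint, ih _ (by omega), rl]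
    · split_ifs <;> simp
    · split_ifs with h
      · rw [Finset.disjoint_singleton_left]
        intro h'
        rcases altB_ge _ _ (by omega) _ _ _ h' with h'' | h'' <;> omega
      · simp

lemma disj_AB (d a : ℕ) (hd : 1 ≤ d) (ha : 1 ≤ a) (p : Bool) (w : List Bool) :
    ∀ y ∈ pathA d a w, y ∉ altB d p a w := by
  induction w generalizing a p with
  | nil => simp [altB]
  | cons s w ih =>
    intro y hy hy'
    have h1 := altB_ge _ _ ha _ _ _ hy'
    simp only [pathA, Finset.mem_insert] at hy
    rcases hy with rfl | hy
    · omega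
    · have h2 := pathA_ge _ _ _ _ hy
      simp only [altB, Finset.mem_union] at hy'
      rcases hy' with hy' | hy'
      · split_ifs at hy' <;> simp at hy'
        omega
      · exact ih _ (by omega) _ y hy hy'

lemma leftmost (col : ℕ → Prop) (d m : ℕ) : ∀ a, 
    (∃ w : List Bool, w.length = m ∧ ∀ y ∈ pathA d a w, col y) →
    ∃ w : List Bool, w.length = m ∧ (∀ y ∈ pathA d a w, col y) ∧
      ∀ y ∈ altB d false a w, ¬ col y := by
  induction m with
  | zero =>
    rintro a ⟨w, hw, h⟩
    refine ⟨w, hw, h, ?_⟩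
    rw [List.length_eq_zero_iff] at hw
    subst hw
    simp [altB]
  | succ m ih =>
    rintro a ⟨w, hw, h⟩
    have hca : col a := by
      apply h; cases w <;> simp [pathA]
    by_cases hL : ∃ w : List Bool, w.length = m ∧ ∀ y ∈ pathA d (a + d) w, col y
    · obtain ⟨w', h1, h2, h3⟩ := ih _ hL
      refine ⟨false :: w', by simp [h1], ?_, ?_⟩
      · simpa [pathA, hca] using h2
      · simpa [altB] using h3
    · cases w with
      | nil => simp at hw
      | cons s w =>
        simp only [List.length_cons, Nat.add_right_cancel_iff] at hw
        simp only [pathA, Finset.mem_insert, forall_eq_or_imp] at h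
        cases s with
        | false => exact absurd ⟨w, hw, by simpa using h.2⟩ hL
        | true =>
          obtain ⟨w', h1, h2, h3⟩ := ih (a + d + 1) ⟨w, hw, by simpa using h.2⟩
          refine ⟨true :: w', by simp [h1], ?_, ?_⟩
          · simpa [pathA, hca] using h2
          · cases w' with
            | nil => simp [altB]
            | cons s w'' =>
              cases s with
              | true => simpa [altB] using h3
              | false =>
                have h4 : ¬ col (a + d) := by
                  intro hc
                  apply hL
                  refine ⟨true :: w'', by simpa using h1, ?_⟩
                  simp [pathA] at h2 ⊢
                  refine ⟨hc, ?_⟩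
                  have e : a + d + d + 1 = a + d + 1 + d := by omega
                  rw [e]; exact h2.2
                simp [altB] at h3 ⊢
                exact ⟨h4, h3⟩

lemma word_of_seq (col : ℕ → Prop) (d m : ℕ) : ∀ x : ℕ → ℕ,
    (∀ j < m + 1, col (x j)) →
    (∀ j, j + 1 < m + 1 → x j + d ≤ x (j + 1) ∧ x (j + 1) ≤ x j + d + 1) →
    ∃ w : List Bool, w.length = m ∧ ∀ y ∈ pathA d (x 0) w, col y := by
  induction m with
  | zero => intro x hx _; exact ⟨[], rfl, by simpa [pathA] using hx 0 (by omega)⟩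
  | succ m ih =>
    intro x hx hd
    obtain ⟨w, h1, h2⟩ := ih (fun j => x (j + 1)) (fun j hj => hx (j + 1) (by omega))
      (fun j hj => hd (j + 1) (by omega))
    have h0 := hd 0 (by omega)
    simp only [zero_add] at h0 h2
    have h00 := hx 0 (by omega)
    rcases (by omega : x 1 = x 0 + d ∨ x 1 = x 0 + d + 1) with h | h
    · exact ⟨false :: w, by simp [h1], by rw [h] at h2; simpa [pathA, h00] using h2⟩
    · exact ⟨true :: w, by simp [h1], by rw [h] at h2; simpa [pathA, h00] using h2⟩

/-- The colourings (subsets of `range M`) killed by the word `w`. -/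
def badE (M d a : ℕ) (w : List Bool) : Finset (Finset ℕ) :=
  Finset.Icc (pathA d a w) (Finset.range M \ altB d false a w) ∪
  Finset.Icc (altB d false a w) (Finset.range M \ pathA d a w)

lemma card_badE (M d a : ℕ) (w : List Bool) (hd : 1 ≤ d) (ha : 1 ≤ a)
    (hM : a + (d + 1) * w.length < M) :
    ((badE M d a w).card : ℝ) ≤ 2 ^ M * (1 / 2) ^ w.length * (1 / 2) ^ rl false w := by
  have hA : pathA d a w ⊆ Finset.range M := fun y hy => by
    have := pathA_le _ _ _ _ hy; simp; omega
  have hB : altB d false a w ⊆ Finset.range M := fun y hy => by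
    have := altB_le _ _ _ _ _ hy; simp; omega
  have hdis : Disjoint (pathA d a w) (altB d false a w) :=
    Finset.disjoint_left.2 (disj_AB d a hd ha false w)
  have cA := card_pathA d a hd w
  have cB := card_altB d a hd ha false w
  have hU : w.length + 1 + rl false w ≤ M := by
    have := Finset.card_le_card (Finset.union_subset hA hB)
    rw [Finset.card_union_of_disjoint hdis, cA, cB, Finset.card_range] at this
    exact this
  have h1 : pathA d a w ⊆ Finset.range M \ altB d false a w :=
    Finset.subset_sdiff.2 ⟨hA, hdis⟩
  have h2 : altB d false a w ⊆ Finset.range M \ pathA d a w :=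
    Finset.subset_sdiff.2 ⟨hB, hdis.symm⟩
  obtain ⟨r, hr⟩ := Nat.exists_eq_add_of_le hU
  have h3 : (badE M d a w).card ≤ 2 ^ r + 2 ^ r := by
    refine (Finset.card_union_le _ _).trans ?_
    rw [Finset.card_Icc_finset h1, Finset.card_Icc_finset h2, Finset.card_sdiff_of_subset hA,
      Finset.card_sdiff_of_subset hB, cA, cB, Finset.card_range]
    apply le_of_eq
    congr 2 <;> omega
  have h4 : ((badE M d a w).card : ℝ) ≤ 2 ^ r + 2 ^ r := by exact_mod_cast h3
  refine h4.trans (le_of_eq ?_)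
  rw [hr, pow_add, pow_add, pow_add, one_div, inv_pow, inv_pow]
  field_simp
  ring

lemma exists_good (k N : ℕ) (hk : 3 ≤ k)
    (hN : (N : ℝ) ≤ (Real.sqrt (2 / (1 + 1 / Real.sqrt 2))) ^ k) :
    ∃ S ⊆ Finset.range (N + (N + 1) * k + 1), ∀ a ∈ Finset.Icc 1 N, ∀ d ∈ Finset.Icc 1 (N / (k - 1)),
      ∀ w ∈ wordsF (k - 1), S ∉ badE (N + (N + 1) * k + 1) d a w := by
  obtain ⟨m, rfl⟩ : ∃ m, k = m + 1 := ⟨k - 1, by omega⟩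
  simp only [Nat.add_sub_cancel]
  set M := N + (N + 1) * (m + 1) + 1 with hMdef
  set bad := (Finset.Icc 1 N).biUnion fun a => (Finset.Icc 1 (N / m)).biUnion fun d =>
    (wordsF m).biUnion fun w => badE M d a w with hbad
  set lam : ℝ := 1 + 1 / √2 with hlam
  have hl : 1 < lam := by rw [hlam]; have : (0 : ℝ) < 1 / √2 := by positivity
                          linarith
  have hlp : 0 < lam := by linarith
  have hcard : (bad.card : ℝ) ≤ N * ((N / m : ℕ) * (2 ^ M * (1 / 2) ^ m * (√2 * lam ^ m))) := by
    have h1 : bad.card ≤ ∑ a ∈ Finset.Icc 1 N, ∑ d ∈ Finset.Icc 1 (N / m),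
        ∑ w ∈ wordsF m, (badE M d a w).card := by
      refine Finset.card_biUnion_le.trans (Finset.sum_le_sum fun a _ => ?_)
      refine Finset.card_biUnion_le.trans (Finset.sum_le_sum fun d _ => ?_)
      exact Finset.card_biUnion_le
    have h2 : (bad.card : ℝ) ≤ ∑ a ∈ Finset.Icc 1 N, ∑ d ∈ Finset.Icc 1 (N / m),
        ∑ w ∈ wordsF m, ((badE M d a w).card : ℝ) := by exact_mod_cast h1
    refine h2.trans ?_
    have h3 : ∀ a ∈ Finset.Icc 1 N, ∀ d ∈ Finset.Icc 1 (N / m),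
        ∑ w ∈ wordsF m, ((badE M d a w).card : ℝ) ≤ 2 ^ M * (1 / 2) ^ m * (√2 * lam ^ m) := by
      intro a ha d hd
      rw [Finset.mem_Icc] at ha hd
      have hdN : d ≤ N := hd.2.trans (Nat.div_le_self _ _)
      calc _ ≤ ∑ w ∈ wordsF m, (2 : ℝ) ^ M * (1 / 2) ^ m * (1 / 2) ^ rl false w := by
            refine Finset.sum_le_sum fun w hw => ?_
            rw [mem_wordsF] at hw
            rw [← hw]
            refine card_badE M d a w hd.1 ha.1 ?_
            rw [hw]
            have : (d + 1) * m ≤ (N + 1) * (m + 1) := Nat.mul_le_mul (by omega) (by omega)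
            omega
        _ ≤ _ := by
            rw [← Finset.mul_sum]
            exact mul_le_mul_of_nonneg_left (sum_rl_le m).1 (by positivity)
    calc _ ≤ ∑ a ∈ Finset.Icc 1 N, ∑ d ∈ Finset.Icc 1 (N / m),
          (2 : ℝ) ^ M * (1 / 2) ^ m * (√2 * lam ^ m) :=
          Finset.sum_le_sum fun a ha => Finset.sum_le_sum fun d hd => h3 a ha d hd
      _ = _ := by simp
  have hlt : (bad.card : ℝ) < 2 ^ M := by
    refine hcard.trans_lt ?_
    have hm : (2 : ℝ) ≤ m := by exact_mod_cast (by omega : 2 ≤ m)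
    have hdiv : ((N / m : ℕ) : ℝ) ≤ N / m := Nat.cast_div_le
    have hsq : (N : ℝ) * N ≤ (2 / lam) ^ (m + 1) := by
      calc (N : ℝ) * N ≤ √(2 / lam) ^ (m + 1) * √(2 / lam) ^ (m + 1) := by gcongr
        _ = _ := by rw [← mul_pow, Real.mul_self_sqrt (by positivity)]
    have hsq2 : (N : ℝ) * N * ((1 / 2) ^ m * lam ^ m) ≤ 2 / lam := by
      calc _ ≤ (2 / lam) ^ (m + 1) * ((1 / 2) ^ m * lam ^ m) := by gcongr
        _ = _ := by
          rw [pow_succ, div_pow, one_div, inv_pow]; field_simp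
    have h22 : √2 * √2 = (2 : ℝ) := Real.mul_self_sqrt (by norm_num)
    have h20 : (0 : ℝ) < √2 := by positivity
    have hfin : √2 / m * (2 / lam) < 1 := by
      have hlam2 : √2 < lam := by
        have hi : 1 / √2 = √2 / 2 := by field_simp; linarith
        rw [hlam, hi]; nlinarith
      rw [div_mul_div_comm, div_lt_one (by positivity)]
      nlinarith
    calc (N : ℝ) * ((N / m : ℕ) * (2 ^ M * (1 / 2) ^ m * (√2 * lam ^ m)))
        ≤ N * ((N / m) * (2 ^ M * (1 / 2) ^ m * (√2 * lam ^ m))) := by gcongr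
      _ = 2 ^ M * (√2 / m * (N * N * ((1 / 2) ^ m * lam ^ m))) := by ring
      _ ≤ 2 ^ M * (√2 / m * (2 / lam)) := by gcongr
      _ < 2 ^ M * 1 := by gcongr
      _ = 2 ^ M := mul_one _
  have hlt' : bad.card < (Finset.range M).powerset.card := by
    rw [Finset.card_powerset, Finset.card_range]; exact_mod_cast hlt
  obtain ⟨S, hS, hSb⟩ := Finset.exists_mem_notMem_of_card_lt_card hlt'
  refine ⟨S, Finset.mem_powerset.1 hS, fun a ha d hd w hw hmem => hSb ?_⟩
  simp only [hbad, Finset.mem_biUnion]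
  exact ⟨a, ha, d, hd, w, hw, hmem⟩

lemma not_mem_of_le (k N : ℕ) (hk : 3 ≤ k)
    (hN : (N : ℝ) ≤ (Real.sqrt (2 / (1 + 1 / Real.sqrt 2))) ^ k) :
    ∃ χ : ℕ → Fin 2, ¬ ∃ x : ℕ → ℕ,
    (∀ j < k, x j ∈ Finset.Icc 1 N) ∧ (∀ j < k, χ (x j) = χ (x 0)) ∧ IsQuasiProg 1 k x := by
  obtain ⟨S, hSM, hS⟩ := exists_good k N hk hN
  obtain ⟨m, rfl⟩ : ∃ m, k = m + 1 := ⟨k - 1, by omega⟩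
  simp only [Nat.add_sub_cancel] at hS hSM
  set M := N + (N + 1) * (m + 1) + 1 with hMdef
  refine ⟨fun y => if y ∈ S then 1 else 0, ?_⟩
  rintro ⟨x, hx, hmono, d, hd, hstep⟩
  have hgrow : ∀ j < m + 1, x 0 + j * d ≤ x j := by
    intro j
    induction j with
    | zero => simp
    | succ j ih =>
      intro hj
      have h1 := ih (by omega)
      have h2 := (hstep j hj).1
      rw [Nat.succ_mul]; omega
  have hx0 := hx 0 (by omega)
  have hxm := Finset.mem_Icc.1 (hx m (by omega))
  have hdm : d ∈ Finset.Icc 1 (N / m) := by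
    rw [Finset.mem_Icc]
    refine ⟨hd, ?_⟩
    rw [Nat.le_div_iff_mul_le (by omega), mul_comm]
    have := hgrow m (by omega)
    omega
  have hdN : d ≤ N := (Finset.mem_Icc.1 hdm).2.trans (Nat.div_le_self _ _)
  have hiff : ∀ j < m + 1, (x j ∈ S ↔ x 0 ∈ S) := by
    intro j hj
    have := hmono j hj
    by_cases h1 : x j ∈ S <;> by_cases h2 : x 0 ∈ S <;> simp_all
  obtain ⟨w, hw, hA, hB⟩ := leftmost (fun y => y ∈ S ↔ x 0 ∈ S) d m (x 0)
    (word_of_seq (fun y => y ∈ S ↔ x 0 ∈ S) d m x hiff hstep)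
  apply hS (x 0) hx0 d hdm w ((mem_wordsF _ _).2 hw)
  have hbd : x 0 + (d + 1) * w.length < M := by
    rw [hw]
    have : (d + 1) * m ≤ (N + 1) * (m + 1) := Nat.mul_le_mul (by omega) (by omega)
    have := (Finset.mem_Icc.1 hx0).2
    omega
  rw [badE, Finset.mem_union, Finset.mem_Icc, Finset.mem_Icc]
  by_cases h0 : x 0 ∈ S
  · left
    simp only [h0, iff_true] at hA hB
    refine ⟨fun y hy => hA y hy, fun y hy => ?_⟩
    exact Finset.mem_sdiff.2 ⟨hSM hy, fun h => hB y h hy⟩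
  · right
    simp only [h0, iff_false, not_not] at hA hB
    refine ⟨fun y hy => hB y hy, fun y hy => ?_⟩
    exact Finset.mem_sdiff.2 ⟨hSM hy, fun h => hA y h hy⟩

lemma Q_nonempty (k : ℕ) : ∃ N, ∀ χ : ℕ → Fin 2, ∃ x : ℕ → ℕ,
    (∀ j < k, x j ∈ Finset.Icc 1 N) ∧ (∀ j < k, χ (x j) = χ (x 0)) ∧ IsQuasiProg 1 k x := by
  obtain ⟨ι, _, h⟩ := Combinatorics.Line.exists_mono_in_high_dimension (Fin (k + 1)) (Fin 2)
  refine ⟨1 + Fintype.card ι * k, fun χ => ?_⟩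
  obtain ⟨l, c, hl⟩ := h (fun v => χ (1 + ∑ i, (v i : ℕ)))
  have hcol : ∀ j, χ (1 + ∑ i, (l (Fin.ofNat (k + 1) j) i : ℕ)) = c := fun j => hl _
  refine ⟨fun j => 1 + ∑ i, (l (Fin.ofNat (k + 1) j) i : ℕ), ?_, ?_, ?_⟩
  · intro j _
    rw [Finset.mem_Icc]
    refine ⟨by simp only; omega, ?_⟩
    have : ∑ i, (l (Fin.ofNat (k + 1) j) i : ℕ) ≤ ∑ i : ι, k :=
      Finset.sum_le_sum fun i _ => by omega
    simp at this ⊢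
    exact this
  · intro j _
    exact (hcol j).trans (hcol 0).symm
  · refine ⟨∑ i, if l.idxFun i = none then 1 else 0, ?_, ?_⟩
    · obtain ⟨i, hi⟩ := l.proper
      have := Finset.single_le_sum (f := fun i => if l.idxFun i = none then 1 else 0)
        (fun _ _ => Nat.zero_le _) (Finset.mem_univ i)
      simpa [hi] using this
    · intro j hj
      have : ∑ i, (l (Fin.ofNat (k + 1) (j + 1)) i : ℕ) = ∑ i, (l (Fin.ofNat (k + 1) j) i : ℕ)
          + ∑ i, if l.idxFun i = none then 1 else 0 := by
        rw [← Finset.sum_add_distrib]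
        refine Finset.sum_congr rfl fun i _ => ?_
        rw [Combinatorics.Line.apply_def, Combinatorics.Line.apply_def]
        cases hi : l.idxFun i with
        | none =>
          simp [hi, Fin.ofNat, Nat.mod_eq_of_lt (show j + 1 < k + 1 by omega),
            Nat.mod_eq_of_lt (show j < k + 1 by omega)]
        | some y => simp [hi]
      simp only
      omega

/-- `Q_1(2,k) > β^k` for all sufficiently large `k`, where
`β = √(2/(1 + 1/√2)) ≈ 1.08239` is the smallest positive real root of `y⁴ - 8y² + 8`. -/
theorem Q_one_two_exponential_lower_bound :
    ∃ K : ℕ, ∀ k, K ≤ k →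
      (Real.sqrt (2 / (1 + 1 / Real.sqrt 2))) ^ k < (Q 1 2 k : ℝ) := by
  refine ⟨3, fun k hk => ?_⟩
  by_contra! hcon
  obtain ⟨χ, hχ⟩ := not_mem_of_le k (Q 1 2 k) hk hcon
  exact hχ (Nat.sInf_mem (Q_nonempty k) χ)
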